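/- For every α > 0 there is a constant C(α) such that every graph G with maximum degree Δ ≥ 2 and minimum degree δ(G) ≥ α·Δ satisfies χ_CF(G) ≤ C(α)·ln Δ. -/

import Mathlib

open Finset in
/-- If `P` depends only on the coordinates in `D` and `Q` only on the coordinates outside `D`, then
`P` and `Q` are independent under the uniform distribution on functions. -/
theorem card_filter_and_mul_card {V L : Type*} [Fintype V] [DecidableEq V] [Fintype L]
    (D : Finset V) (P Q : (V → L) → Prop) [DecidablePred P] [DecidablePred Q]
    (hP : ∀ f g : V → L, (∀ u ∈ D, f u = g u) → P f → P g)
    (hQ : ∀ f g : V → L, (∀ u ∉ D, f u = g u) → Q f → Q g) :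
    #{f | P f ∧ Q f} * Fintype.card (V → L) = #{f | P f} * #{f | Q f} := by
  rw [← card_univ, ← card_product, ← card_product]
  let swap : (V → L) × (V → L) → (V → L) × (V → L) := fun x =>
    (fun u => if u ∈ D then x.1 u else x.2 u, fun u => if u ∈ D then x.2 u else x.1 u)
  have swap_swap (x) : swap (swap x) = x := by
    ext u <;> by_cases hu : u ∈ D <;> simp [swap, hu]
  refine card_nbij' swap swap ?_ ?_ (fun x _ => swap_swap x) (fun x _ => swap_swap x)
  · rintro ⟨f, g⟩ h
    simp only [coe_product, Set.mem_prod, mem_coe, mem_filter, mem_univ, true_and,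
      and_true] at h ⊢
    exact ⟨hP f _ (fun u hu => by simp [swap, hu]) h.1,
      hQ f _ (fun u hu => by simp [swap, hu]) h.2⟩
  · rintro ⟨f, g⟩ h
    simp only [coe_product, Set.mem_prod, mem_coe, mem_filter, mem_univ, true_and,
      and_true] at h ⊢
    exact ⟨hP f _ (fun u hu => by simp [swap, hu]) h.1,
      hQ g _ (fun u hu => by simp [swap, hu]) h.2⟩

open Finset in
/-- The symmetric Lovász Local Lemma for the uniform distribution on functions `V → L`, where the
event `A i` is determined by the coordinates in `D i`. -/
theorem exists_avoiding_of_local {ι V L : Type*} [Fintype ι] [DecidableEq ι] [Fintype V]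
    [DecidableEq V] [Fintype L] [Nonempty L] (D : ι → Finset V) (A : ι → (V → L) → Prop)
    [∀ i, DecidablePred (A i)]
    (hA : ∀ i, ∀ f g : V → L, (∀ u ∈ D i, f u = g u) → A i f → A i g)
    (d : ℕ) (p : ℝ) (hd : ∀ i, #{j | ¬Disjoint (D i) (D j)} ≤ d) (hp : 0 ≤ p)
    (hprob : ∀ i, (#{f | A i f} : ℝ) ≤ p * Fintype.card (V → L))
    (hpd : 4 * p * d ≤ 1) (hp2 : 2 * p < 1) :
    ∃ f, ∀ i, ¬A i f := by
  let good (S : Finset ι) : ℝ := #{f : V → L | ∀ j ∈ S, ¬A j f}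
  let both (i : ι) (S : Finset ι) : ℝ := #{f : V → L | A i f ∧ ∀ j ∈ S, ¬A j f}
  have both_le_good (i S) : both i S ≤ good S := by
    simp only [both, good]
    gcongr with f
    exact fun h => h.2
  have both_anti (i) {S T : Finset ι} (h : T ⊆ S) : both i S ≤ both i T := by
    simp only [both]
    gcongr
  have hN : (0 : ℝ) < Fintype.card (V → L) := by exact_mod_cast Fintype.card_pos
  have good_nonneg (S) : 0 ≤ good S := Nat.cast_nonneg _
  have indep (i) (S : Finset ι) (hS : ∀ j ∈ S, Disjoint (D i) (D j)) :
      both i S ≤ p * good S := by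
    have h := card_filter_and_mul_card (D i) (A i) (fun f => ∀ j ∈ S, ¬A j f) (hA i)
      (fun f g hfg hf j hj hg => hf j hj (hA j g f (fun u hu =>
        (hfg u (Finset.disjoint_right.mp (hS j hj) hu)).symm) hg))
    have h' : both i S * Fintype.card (V → L) = #{f | A i f} * good S := by
      simp only [both, good]
      exact_mod_cast h
    refine le_of_mul_le_mul_right ?_ hN
    rw [h']
    nlinarith [mul_le_mul_of_nonneg_right (hprob i) (good_nonneg S)]
  have good_sdiff (S T : Finset ι) (hTS : T ⊆ S) :
      good T ≤ good S + ∑ j ∈ S \ T, both j T := by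
    classical
    simp only [good, both]
    norm_cast
    refine le_trans (card_le_card (t := ({f : V → L | ∀ j ∈ S, ¬A j f} : Finset _) ∪
      (S \ T).biUnion fun j => {f : V → L | A j f ∧ ∀ j ∈ T, ¬A j f}) ?_)
      (le_trans (card_union_le _ _) (Nat.add_le_add_left card_biUnion_le _))
    intro f hf
    simp only [mem_filter, mem_univ, true_and, mem_union, mem_biUnion, mem_sdiff] at hf ⊢
    by_cases h : ∀ j ∈ S, ¬A j f
    · exact Or.inl h
    · push Not at h
      obtain ⟨j, hj, hAj⟩ := h
      exact Or.inr ⟨j, ⟨hj, fun hjT => hf j hjT hAj⟩, hAj, hf⟩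
  have key (S : Finset ι) : ∀ i, both i S ≤ 2 * p * good S := by
    induction S using Finset.strongInduction with
    | H S ih =>
      intro i
      set T := S.filter (fun j => Disjoint (D i) (D j)) with hT
      have hTS : T ⊆ S := filter_subset _ _
      have h1 : both i S ≤ p * good T :=
        (both_anti i hTS).trans (indep i T fun j hj => (mem_filter.mp hj).2)
      by_cases hTS' : T = S
      · rw [hTS'] at h1
        nlinarith [good_nonneg S, mul_nonneg hp (good_nonneg S)]
      have h2 : ∑ j ∈ S \ T, both j T ≤ d * (2 * p * good T) := by
        refine (sum_le_card_nsmul _ _ (2 * p * good T) fun j _ =>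
          ih T (hTS.ssubset_of_ne hTS') j).trans ?_
        rw [nsmul_eq_mul]
        have : #(S \ T) ≤ d := by
          refine (card_le_card fun j hj => ?_).trans (hd i)
          simp only [hT, mem_sdiff, mem_filter, not_and] at hj
          simpa using hj.2 hj.1
        have := good_nonneg T
        gcongr
      have h3 := good_sdiff S T hTS
      have h4 : good T ≤ 2 * good S := by
        nlinarith [mul_le_mul_of_nonneg_right hpd (good_nonneg T)]
      nlinarith [mul_le_mul_of_nonneg_left h4 hp]
  have pos (S : Finset ι) : 0 < good S := by
    induction S using Finset.induction_on with
    | empty => simpa [good] using hN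
    | insert i S hi ih =>
      have h1 := good_sdiff (insert i S) S (subset_insert i S)
      rw [insert_sdiff_cancel hi, sum_singleton] at h1
      nlinarith [key S i]
  have := pos univ
  simp only [good, Nat.cast_pos, card_pos] at this
  obtain ⟨f, hf⟩ := this
  exact ⟨f, fun i => (mem_filter.mp hf).2 i (mem_univ i)⟩

open Finset Nat in
theorem sum_choose_mul_factorial_div_pow_le {m : ℕ} {x : ℝ} (hx : 0 < x) :
    ∑ j ∈ range (m + 1) with j ≠ 1, (m.choose j : ℝ) * ((m - j)! / x ^ (m - j)) ≤
      m ! / x ^ m * (Real.exp x - x) := by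
  have h1 : ∑ j ∈ range (m + 1) with j ≠ 1, (m.choose j : ℝ) * ((m - j)! / x ^ (m - j)) =
      m ! / x ^ m * ∑ j ∈ range (m + 1) with j ≠ 1, x ^ j / j ! := by
    rw [mul_sum]
    refine sum_congr rfl fun j hj => ?_
    have hj : j ≤ m := by simp at hj; lia
    rw [Nat.cast_choose ℝ hj]
    have : x ^ m = x ^ j * x ^ (m - j) := by rw [← pow_add]; congr 1; lia
    rw [this]
    have := Nat.factorial_ne_zero (m - j)
    have := Nat.factorial_ne_zero j
    field_simp
  rw [h1]
  gcongr
  have h2 := Real.sum_le_exp_of_nonneg hx.le (m + 2)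
  have h3 : ∑ j ∈ range (m + 2), x ^ j / j ! =
      x + ∑ j ∈ range (m + 2) with j ≠ 1, x ^ j / j ! := by
    rw [filter_ne', ← add_sum_erase _ (fun j => x ^ j / (j ! : ℝ)) (by simp : 1 ∈ range (m + 2))]
    simp
  have h4 : ∑ j ∈ range (m + 1) with j ≠ 1, x ^ j / j ! ≤
      ∑ j ∈ range (m + 2) with j ≠ 1, x ^ j / j ! := by
    refine sum_le_sum_of_subset_of_nonneg (filter_subset_filter _ (range_subset_range.mpr (by lia)))
      fun _ _ _ => by positivity
  linarith

open Finset Nat in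
/-- A generating function bound for the number of labelings of `D` by `K ∪ T` in which no label
from `K` occurs exactly once. -/
theorem card_piFinset_no_unique_label_le {V L : Type*} [Fintype V] [DecidableEq V]
    [DecidableEq L] {x : ℝ} (hx : 0 < x) (T K : Finset L) (hKT : Disjoint K T) :
    ∀ (D : Finset V) (S : V → Finset L),
    (#{f ∈ Fintype.piFinset (fun u => if u ∈ D then K ∪ T else S u) |
        ∀ a ∈ K, #{u ∈ D | f u = a} ≠ 1} : ℝ) ≤
      (#D)! / x ^ #D * ((Real.exp x - x) ^ #K * Real.exp (x * #T)) * ∏ u ∈ Dᶜ, (#(S u) : ℝ) := by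
  have hex : 0 ≤ Real.exp x - x := by linarith [Real.add_one_le_exp x]
  induction K using Finset.induction_on with
  | empty =>
    intro D S
    have hcard : (#{f ∈ Fintype.piFinset (fun u => if u ∈ D then ∅ ∪ T else S u) |
        ∀ a ∈ (∅ : Finset L), #{u ∈ D | f u = a} ≠ 1} : ℝ) =
        (#T : ℝ) ^ #D * ∏ u ∈ Dᶜ, (#(S u) : ℝ) := by
      rw [filter_true_of_mem (by simp), Fintype.card_piFinset, ← prod_mul_prod_compl D]
      push_cast
      congr 1
      · rw [← prod_const]
        exact prod_congr rfl fun u hu => by simp [hu]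
      · exact prod_congr rfl fun u hu => by simp [mem_compl.mp hu]
    rw [hcard]
    gcongr
    have h := Real.pow_div_factorial_le_exp (x := x * #T) (by positivity) (#D)
    have := Nat.factorial_pos (#D)
    rw [div_le_iff₀ (by positivity), mul_pow] at h
    simp only [card_empty, pow_zero, one_mul]
    rw [div_mul_eq_mul_div, le_div_iff₀ (by positivity)]
    linarith
  | insert a K ha ih =>
    intro D S
    rw [disjoint_insert_left] at hKT
    set B := {f ∈ Fintype.piFinset (fun u => if u ∈ D then insert a K ∪ T else S u) |
        ∀ b ∈ insert a K, #{u ∈ D | f u = b} ≠ 1} with hB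
    set R := (Real.exp x - x) ^ #K * Real.exp (x * #T) with hR
    have hR0 : 0 ≤ R := by positivity
    set P := ∏ u ∈ Dᶜ, (#(S u) : ℝ) with hP
    have hP0 : 0 ≤ P := prod_nonneg fun _ _ => by positivity
    let cls : (V → L) → Finset V := fun f => {u ∈ D | f u = a}
    have hmaps : ∀ f ∈ B, cls f ∈ D.powerset.filter (fun E => #E ≠ 1) := by
      intro f hf
      simp only [hB, mem_filter] at hf
      simp only [mem_filter, mem_powerset, cls]
      exact ⟨filter_subset _ _, hf.2 a (mem_insert_self a K)⟩
    have hfib : ∀ E ∈ D.powerset.filter (fun E => #E ≠ 1),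
        (#{f ∈ B | cls f = E} : ℝ) ≤ (#D - #E)! / x ^ (#D - #E) * R * P := by
      intro E hE
      simp only [mem_filter, mem_powerset] at hE
      have h := ih hKT.2 (D \ E) (fun u => if u ∈ E then {a} else S u)
      rw [card_sdiff_of_subset hE.1] at h
      have hprod : ∏ u ∈ (D \ E)ᶜ, (#(if u ∈ E then {a} else S u) : ℝ) = P := by
        rw [hP]
        symm
        refine prod_subset_one_on_sdiff (fun u => by simp; tauto) ?_ ?_
        · intro u hu
          have : u ∈ E := by simp at hu; tauto
          simp [this]
        · intro u hu
          have : u ∉ E := fun h => (mem_compl.mp hu) (hE.1 h)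
          simp [this]
      rw [hprod] at h
      refine le_trans ?_ h
      norm_cast
      refine card_le_card fun f hf => ?_
      simp only [hB, mem_filter, Fintype.mem_piFinset] at hf ⊢
      obtain ⟨⟨hf1, hf2⟩, rfl⟩ := hf
      refine ⟨fun u => ?_, fun b hb => ?_⟩
      · have h1 := hf1 u
        by_cases hu : u ∈ D
        · by_cases hua : f u = a
          · have h2 : u ∈ cls f := mem_filter.mpr ⟨hu, hua⟩
            simp [h2, hua]
          · have h2 : u ∉ cls f := fun h => hua (mem_filter.mp h).2
            rw [if_pos (mem_sdiff.mpr ⟨hu, h2⟩)]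
            rw [if_pos hu, insert_union] at h1
            exact (mem_insert.mp h1).resolve_left hua
        · have h2 : u ∉ cls f := fun h => hu (mem_filter.mp h).1
          rw [if_neg fun h => hu (mem_sdiff.mp h).1, if_neg h2]
          rwa [if_neg hu] at h1
      · have hba : b ≠ a := fun h => ha (h ▸ hb)
        convert hf2 b (mem_insert_of_mem hb) using 3
        ext u
        simp only [cls, mem_filter, mem_sdiff]
        constructor
        · rintro ⟨⟨h1, -⟩, h2⟩
          exact ⟨h1, h2⟩
        · rintro ⟨h1, h2⟩
          exact ⟨⟨h1, fun h => hba (h2 ▸ h.2)⟩, h2⟩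
    rw [card_eq_sum_card_fiberwise (t := D.powerset.filter (fun E => #E ≠ 1)) hmaps]
    push_cast
    refine (sum_le_sum hfib).trans ?_
    rw [← sum_mul, ← sum_mul, sum_filter,
      sum_powerset_apply_card (fun j => if j ≠ 1 then ((#D - j)! / x ^ (#D - j) : ℝ) else 0)]
    simp only [nsmul_eq_mul, mul_ite, mul_zero]
    rw [← sum_filter, card_insert_of_notMem ha]
    have h := sum_choose_mul_factorial_div_pow_le (m := #D) hx
    refine (mul_le_mul_of_nonneg_right (mul_le_mul_of_nonneg_right h hR0) hP0).trans_eq ?_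
    rw [hR, pow_succ]
    ring

open Nat in
theorem factorial_mul_exp_le (m : ℕ) (hm : m ≠ 0) :
    (m ! : ℝ) * Real.exp m ≤ Real.exp 1 * m * m ^ m := by
  obtain ⟨k, rfl⟩ := Nat.exists_eq_succ_of_ne_zero hm
  have h := Stirling.stirlingSeq'_antitone (Nat.zero_le k)
  simp only [Function.comp, succ_eq_add_one, zero_add, Stirling.stirlingSeq_one] at h ⊢
  rw [Stirling.stirlingSeq] at h
  set m := k + 1
  have hm1 : (1 : ℝ) ≤ m := by simp [m]
  rw [div_le_iff₀ (by positivity), div_pow, ← Real.exp_nat_mul, mul_one,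
    Real.sqrt_mul zero_le_two] at h
  have h1 : √(m : ℝ) ≤ m := by
    rw [Real.sqrt_le_left (by positivity)]
    nlinarith
  calc (m ! : ℝ) * Real.exp m
      ≤ (Real.exp 1 / √2 * (√2 * √m * (m ^ m / Real.exp m))) * Real.exp m := by gcongr
    _ = Real.exp 1 * √m * m ^ m := by field_simp
    _ ≤ _ := by gcongr

open Finset Nat in
/-- A uniformly random labeling of `V` by `M` labels leaves each of `k` given labels non-unique on
`D` with probability exponentially small in `k`. -/
theorem card_no_unique_label_le {V : Type*} [Fintype V] [DecidableEq V] {M k : ℕ} (hM : 0 < M)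
    (hk : k ≤ M) (D : Finset V) (hD : D.Nonempty) :
    (#{f : V → Fin M | ∀ a : Fin M, a.val < k → #{u ∈ D | f u = a} ≠ 1} : ℝ) ≤
      Real.exp 1 * #D * Real.exp (-(k * ((#D / M) * Real.exp (-(#D / M : ℝ))))) *
        Fintype.card (V → Fin M) := by
  have hm : 0 < #D := hD.card_pos
  set m := #D with hmdef
  have hM' : (0 : ℝ) < M := by exact_mod_cast hM
  set x : ℝ := m / M with hxdef
  have hx : 0 < x := by positivity
  let K : Finset (Fin M) := {a | a.val < k}
  have hKc : #K = k := by
    simp only [K]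
    rw [Fin.card_filter_val_lt]
    exact min_eq_right hk
  have h := card_piFinset_no_unique_label_le hx Kᶜ K disjoint_compl_right D (fun _ => univ)
  simp only [union_compl, ite_self, Fintype.piFinset_univ, card_compl, hKc, Fintype.card_fin,
    prod_const, K, mem_filter, mem_univ, true_and] at h
  rw [← hmdef] at h
  refine h.trans ?_
  have hmV : m ≤ Fintype.card V := card_le_univ D
  have hcard : (Fintype.card (V → Fin M) : ℝ) = M ^ m * M ^ (Fintype.card V - m) := by
    rw [Fintype.card_fun, Fintype.card_fin, ← pow_add, Nat.add_sub_cancel' hmV]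
    push_cast
    rfl
  rw [hcard, Finset.card_univ, Fintype.card_fin, ← mul_assoc (Real.exp 1 * m * _)]
  refine mul_le_mul_of_nonneg_right ?_ (by positivity)
  have h1 : Real.exp x - x = Real.exp x * (1 - x * Real.exp (-x)) := by
    rw [Real.exp_neg]; field_simp
  have h2 : (Real.exp x - x) ^ k ≤ Real.exp (k * x) * Real.exp (-(k * (x * Real.exp (-x)))) := by
    have h0 : 0 ≤ Real.exp x - x := by linarith [Real.add_one_le_exp x]
    rw [Real.exp_nat_mul, ← mul_neg, Real.exp_nat_mul, ← mul_pow]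
    gcongr
    rw [h1]
    gcongr
    linarith [Real.add_one_le_exp (-(x * Real.exp (-x)))]
  have h3 : Real.exp (k * x) * Real.exp (x * ((M - k : ℕ) : ℝ)) = Real.exp m := by
    rw [← Real.exp_add, Nat.cast_sub hk]
    congr 1
    rw [hxdef]
    field_simp
    ring
  have h4 := factorial_mul_exp_le m hm.ne'
  have hxm : x ^ m = m ^ m / M ^ m := by rw [hxdef, div_pow]
  have hmm : (0 : ℝ) < m ^ m := by positivity
  calc (m ! : ℝ) / x ^ m * ((Real.exp x - x) ^ k * Real.exp (x * ((M - k : ℕ) : ℝ)))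
      ≤ (m ! : ℝ) / x ^ m * ((Real.exp (k * x) * Real.exp (-(k * (x * Real.exp (-x))))) *
          Real.exp (x * ((M - k : ℕ) : ℝ))) := by gcongr
    _ = (m ! : ℝ) / x ^ m * (Real.exp m * Real.exp (-(k * (x * Real.exp (-x))))) := by
        rw [← h3]; ring
    _ = (m ! * Real.exp m) * Real.exp (-(k * (x * Real.exp (-x)))) * M ^ m / m ^ m := by
        rw [hxm]; field_simp
    _ ≤ (Real.exp 1 * m * m ^ m) * Real.exp (-(k * (x * Real.exp (-x)))) * M ^ m / m ^ m := by
        gcongr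
    _ = _ := by field_simp

/-- Greedy coloring. -/
theorem SimpleGraph.colorable_maxDegree_add_one {V : Type*} [Fintype V] (G : SimpleGraph V)
    [DecidableRel G.Adj] : G.Colorable (G.maxDegree + 1) := by
  classical
  have h (s : Finset V) : ∃ c : V → Fin (G.maxDegree + 1),
      ∀ u ∈ s, ∀ w ∈ s, G.Adj u w → c u ≠ c w := by
    induction s using Finset.induction_on with
    | empty => exact ⟨fun _ => 0, by simp⟩
    | insert v s hv ih =>
      obtain ⟨c, hc⟩ := ih
      obtain ⟨a, ha⟩ : ∃ a, a ∉ (G.neighborFinset v).image c := by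
        by_contra! h
        have h1 : Fintype.card (Fin (G.maxDegree + 1)) ≤ ((G.neighborFinset v).image c).card :=
          Finset.card_le_card fun a _ => h a
        have h2 := Finset.card_image_le (s := G.neighborFinset v) (f := c)
        have h3 := G.degree_le_maxDegree v
        rw [Fintype.card_fin] at h1
        rw [G.card_neighborFinset_eq_degree] at h2
        lia
      have ha' (w) (hw : G.Adj v w) : c w ≠ a := fun h =>
        ha (Finset.mem_image.mpr ⟨w, by simpa using hw, h⟩)
      refine ⟨Function.update c v a, fun u hu w hw huw => ?_⟩
      rw [Finset.mem_insert] at hu hw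
      rcases eq_or_ne u v with rfl | huv <;> rcases eq_or_ne w u with rfl | hwu
      · exact (G.irrefl huw).elim
      · simpa [Function.update_of_ne hwu] using (ha' w huw).symm
      · exact (G.irrefl huw).elim
      · rw [Function.update_of_ne huv]
        rcases eq_or_ne w v with rfl | hwv
        · simpa using ha' u huw.symm
        · rw [Function.update_of_ne hwv]
          exact hc u (hu.resolve_left huv) w (hw.resolve_left hwv) huw
  obtain ⟨c, hc⟩ := h Finset.univ
  exact ⟨SimpleGraph.Coloring.mk c fun {u w} huw =>
    hc u (Finset.mem_univ u) w (Finset.mem_univ w) huw⟩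

open Finset in
/-- If closed neighborhoods are large, `k` colors and a dummy color suffice for a conflict-free
coloring as soon as the failure probability satisfies the condition of the Local Lemma. -/
theorem SimpleGraph.exists_conflictFree_of_local {V : Type*} [Fintype V] (G : SimpleGraph V)
    [DecidableRel G.Adj] {k : ℕ} {p : ℝ} (hΔ : 0 < G.maxDegree) (hk : k ≤ G.maxDegree)
    (hp : 0 ≤ p) (hpd : 4 * p * ((G.maxDegree + 1) ^ 2 : ℕ) ≤ 1)
    (hdeg : ∀ v, Real.exp 1 * (G.degree v + 1 : ℕ) * Real.exp (-(k *
      (((G.degree v + 1 : ℕ) / G.maxDegree) *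
        Real.exp (-((G.degree v + 1 : ℕ) / G.maxDegree : ℝ))))) ≤ p) :
    ∃ c : V → Fin (k + 1),
      ∀ v : V, ∃ a : Fin (k + 1), ∃! w : V, w ∈ insert v (G.neighborSet v) ∧ c w = a := by
  classical
  let D (v : V) : Finset V := insert v (G.neighborFinset v)
  have hDc (v) : #(D v) = G.degree v + 1 := by
    rw [card_insert_of_notMem (by simp), G.card_neighborFinset_eq_degree]
  have hDc' (v) : #(D v) ≤ G.maxDegree + 1 := by
    rw [hDc]; exact Nat.succ_le_succ (G.degree_le_maxDegree v)
  have hD_symm (u v) (h : u ∈ D v) : v ∈ D u := by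
    simp only [D, mem_insert, mem_neighborFinset] at h ⊢
    exact h.imp Eq.symm fun h => h.symm
  have : Nonempty (Fin G.maxDegree) := ⟨⟨0, hΔ⟩⟩
  obtain ⟨f, hf⟩ := exists_avoiding_of_local (L := Fin G.maxDegree) D
    (fun v f => ∀ a : Fin G.maxDegree, a.val < k → #{u ∈ D v | f u = a} ≠ 1)
    (fun v f g hfg hf a ha => by
      have : {u ∈ D v | g u = a} = {u ∈ D v | f u = a} :=
        filter_congr fun u hu => by rw [hfg u hu]
      rw [this]
      exact hf a ha) ((G.maxDegree + 1) ^ 2) p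
    (fun v => by
      calc #{w | ¬Disjoint (D v) (D w)} ≤ #((D v).biUnion D) := by
            refine card_le_card fun w hw => ?_
            obtain ⟨u, hu, huw⟩ := not_disjoint_iff.mp (mem_filter.mp hw).2
            exact mem_biUnion.mpr ⟨u, hu, hD_symm u w huw⟩
        _ ≤ #(D v) * (G.maxDegree + 1) := card_biUnion_le_card_mul _ _ _ fun u _ => hDc' u
        _ ≤ (G.maxDegree + 1) ^ 2 := by rw [sq]; exact Nat.mul_le_mul_right _ (hDc' v))
    hp
    (fun v => by
      refine (card_no_unique_label_le hΔ hk (D v) ⟨v, mem_insert_self _ _⟩).trans ?_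
      rw [hDc]
      gcongr
      exact hdeg v)
    hpd
    (by
      have : (4 : ℝ) ≤ ((G.maxDegree + 1) ^ 2 : ℕ) := by
        have : 2 ^ 2 ≤ (G.maxDegree + 1) ^ 2 := Nat.pow_le_pow_left (by lia) 2
        exact_mod_cast this
      nlinarith)
  refine ⟨fun u => ⟨min (f u).val k, by lia⟩, fun v => ?_⟩
  have := hf v
  push Not at this
  obtain ⟨a, hak, ha⟩ := this
  obtain ⟨w, hw⟩ := card_eq_one.mp ha
  have hw' (u) : (u ∈ D v ∧ f u = a) ↔ u = w := by
    simpa using Finset.ext_iff.mp hw u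
  refine ⟨⟨a.val, by lia⟩, w, ?_⟩
  have hmem (u) : (u ∈ insert v (G.neighborSet v) ∧
      (⟨min (f u).val k, by lia⟩ : Fin (k + 1)) = ⟨a.val, by lia⟩) ↔ u = w := by
    rw [← hw']
    refine and_congr (by simp [D]) ?_
    rw [Fin.mk.injEq, Fin.ext_iff]
    lia
  exact ⟨(hmem w).mpr rfl, fun u hu => (hmem u).mp hu⟩

/-- For every `α > 0` there is a constant `C(α)` such that every graph with maximum degree
`Δ ≥ 2` and minimum degree at least `α·Δ` has a conflict-free vertex coloring with at most
`C(α)·ln Δ` colors. -/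
theorem near_regular_conflict_free_log_bound (α : ℝ) (hα : 0 < α) :
    ∃ C : ℝ, 0 < C ∧ ∀ (V : Type) [Fintype V] (G : SimpleGraph V) [DecidableRel G.Adj],
      2 ≤ G.maxDegree → (∀ v : V, α * G.maxDegree ≤ G.degree v) →
      ∃ (n : ℕ) (c : V → Fin n),
        (n : ℝ) ≤ C * Real.log G.maxDegree ∧
        ∀ v : V, ∃ a : Fin n, ∃! w : V, w ∈ insert v (G.neighborSet v) ∧ c w = a := by
  set C₀ : ℝ := 12 / (α * Real.exp (-2)) with hC₀
  have hC₀pos : 0 < C₀ := by positivity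
  have hlog2 : 0 < Real.log 2 := Real.log_pos one_lt_two
  refine ⟨C₀ + 2 / Real.log 2, by positivity, fun V _ G _ hΔ hδ => ?_⟩
  set Δ := G.maxDegree with hΔdef
  have hΔ' : (2 : ℝ) ≤ Δ := by exact_mod_cast hΔ
  have hlog : Real.log 2 ≤ Real.log Δ := Real.log_le_log two_pos hΔ'
  have hlogpos : 0 < Real.log Δ := hlog2.trans_le hlog
  set k := ⌈C₀ * Real.log Δ⌉₊ with hk
  have hk_ge : C₀ * Real.log Δ ≤ k := Nat.le_ceil _
  have hk_le : (k : ℝ) + 1 ≤ (C₀ + 2 / Real.log 2) * Real.log Δ := by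
    have h1 : (k : ℝ) < C₀ * Real.log Δ + 1 := Nat.ceil_lt_add_one (by positivity)
    have h2 : 2 ≤ 2 / Real.log 2 * Real.log Δ := by
      rw [div_mul_eq_mul_div, le_div_iff₀ hlog2]
      linarith
    linarith
  rcases le_total Δ k with hΔk | hkΔ
  · obtain ⟨c⟩ := G.colorable_maxDegree_add_one
    refine ⟨Δ + 1, c, ?_, fun v => ⟨c v, v, ⟨Set.mem_insert _ _, rfl⟩, ?_⟩⟩
    · have : (Δ : ℝ) ≤ k := by exact_mod_cast hΔk
      push_cast
      linarith
    · rintro w ⟨rfl | hw, hcw⟩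
      · rfl
      · exact (c.valid hw hcw.symm).elim
  · have hΔpos : (0 : ℝ) < Δ := by linarith
    refine (G.exists_conflictFree_of_local (k := k) (p := 3 * (Δ + 1) / (Δ : ℝ) ^ 12) (by lia) hkΔ
      (by positivity) ?_ ?_).elim fun c hc => ⟨k + 1, c, by exact_mod_cast hk_le, hc⟩
    · rw [← hΔdef]
      push_cast
      have h1 : (Δ : ℝ) + 1 ≤ 2 * Δ := by linarith
      rw [mul_div_assoc', div_mul_eq_mul_div, div_le_one (by positivity)]
      calc 4 * (3 * ((Δ : ℝ) + 1)) * ((Δ : ℝ) + 1) ^ 2 = 12 * ((Δ : ℝ) + 1) ^ 3 := by ring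
        _ ≤ 12 * (2 * (Δ : ℝ)) ^ 3 := by gcongr
        _ = 96 * (Δ : ℝ) ^ 3 := by ring
        _ ≤ 2 ^ 9 * (Δ : ℝ) ^ 3 := by gcongr; norm_num
        _ ≤ (Δ : ℝ) ^ 9 * (Δ : ℝ) ^ 3 := by gcongr
        _ = (Δ : ℝ) ^ 12 := by ring
    · intro v
      rw [← hΔdef]
      have hdeg : (G.degree v : ℝ) ≤ Δ := by exact_mod_cast G.degree_le_maxDegree v
      push_cast
      set x : ℝ := (G.degree v + 1) / Δ with hx
      have hxα : α ≤ x := by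
        rw [hx, le_div_iff₀ hΔpos]
        linarith [hδ v]
      have hx2 : x ≤ 2 := by
        rw [hx, div_le_iff₀ hΔpos]
        linarith
      have hexp : 12 * Real.log Δ ≤ k * (x * Real.exp (-x)) := by
        calc 12 * Real.log Δ = C₀ * Real.log Δ * (α * Real.exp (-2)) := by
              rw [hC₀]; field_simp
          _ ≤ k * (x * Real.exp (-x)) := by gcongr
      have h1 : Real.exp (-(k * (x * Real.exp (-x)))) ≤ 1 / (Δ : ℝ) ^ 12 := by
        calc _ ≤ Real.exp (-(12 * Real.log Δ)) := by gcongr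
          _ = 1 / (Δ : ℝ) ^ 12 := by
            rw [Real.exp_neg, one_div, ← Real.exp_log (pow_pos hΔpos 12), Real.log_pow]
            norm_num
      calc _ ≤ 3 * ((Δ : ℝ) + 1) * (1 / (Δ : ℝ) ^ 12) := by
            gcongr
            exact Real.exp_one_lt_three.le
        _ = _ := by ring
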